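/- Let μ be a Borel probability measure on Ω absolutely continuous with respect to d-dimensional Lebesgue measure, let ν be a Borel probability measure on Ω, let u0 be a Kantorovich potential and T0 an optimal transport map for W1(μ,ν), and let μ̃ = (I − η∇u0)_#μ. If η > 0 and μ({x ∈ Ω : |x − T0(x)| ≥ η}) > 1/2, then W1(μ̃, ν) < W1(μ, ν). -/

import Mathlib

open MeasureTheory Set

noncomputable section

/-- The Wasserstein 1 distance between two Borel probability measures, defined as the
infimum of the transport cost over all couplings. -/
def W1 {d : ℕ} (μ ν : Measure (EuclideanSpace ℝ (Fin d))) : ℝ :=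
  sInf {c | ∃ γ : Measure (EuclideanSpace ℝ (Fin d) × EuclideanSpace ℝ (Fin d)),
    IsProbabilityMeasure γ ∧ γ.map Prod.fst = μ ∧ γ.map Prod.snd = ν ∧
    c = ∫ p, ‖p.1 - p.2‖ ∂γ}

/-- `u0` is a Kantorovich potential for `W1(μ, ν)`: it is 1-Lipschitz on Ω and achieves
the supremum in the dual problem. -/
def IsKantorovichPotential {d : ℕ} (Ω : Set (EuclideanSpace ℝ (Fin d)))
    (μ ν : Measure (EuclideanSpace ℝ (Fin d))) (u0 : EuclideanSpace ℝ (Fin d) → ℝ) : Prop :=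
  LipschitzOnWith 1 u0 Ω ∧
  ∀ u : EuclideanSpace ℝ (Fin d) → ℝ, LipschitzOnWith 1 u Ω →
    ∫ x, u x ∂μ - ∫ x, u x ∂ν ≤ ∫ x, u0 x ∂μ - ∫ x, u0 x ∂ν

/-- `T` is an optimal transport map for `W1(μ, ν)`: a Borel map from Ω to Ω pushing μ
forward to ν whose transport cost equals `W1 μ ν`. -/
def IsOptimalMap {d : ℕ} (Ω : Set (EuclideanSpace ℝ (Fin d)))
    (μ ν : Measure (EuclideanSpace ℝ (Fin d)))
    (T : EuclideanSpace ℝ (Fin d) → EuclideanSpace ℝ (Fin d)) : Prop :=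
  Measurable T ∧ MapsTo T Ω Ω ∧ μ.map T = ν ∧ ∫ x, ‖x - T x‖ ∂μ = W1 μ ν

open scoped CompactlySupported NNReal ENNReal Topology

section duality

set_option linter.unusedSectionVars false

variable {K : Type*} [MetricSpace K] [CompactSpace K] [MeasurableSpace K] [BorelSpace K]

/-- Values of the pairs of continuous functions dominating `h`. -/
def dualSet (μ ν : Measure K) (h : C_c(K × K, ℝ)) : Set ℝ :=
  {r | ∃ φ ψ : C(K, ℝ), (∀ x y, h (x, y) ≤ φ x + ψ y) ∧ r = ∫ x, φ x ∂μ + ∫ x, ψ x ∂ν}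

lemma cont_integrable (μ : Measure K) [IsProbabilityMeasure μ] (φ : C(K, ℝ)) :
    Integrable (fun x => φ x) μ := by
  have := φ.continuous.integrable_of_hasCompactSupport (μ := μ) (HasCompactSupport.of_compactSpace _)
  exact this

lemma dual_lower (μ ν : Measure K) [IsProbabilityMeasure μ] [IsProbabilityMeasure ν]
    (φ ψ : C(K, ℝ)) (b : ℝ) (h : ∀ x y, b ≤ φ x + ψ y) :
    b ≤ ∫ x, φ x ∂μ + ∫ x, ψ x ∂ν := by
  have h1 : ∀ y, b - ψ y ≤ ∫ x, φ x ∂μ := by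
    intro y
    have : ∫ x, (b - ψ y) ∂μ ≤ ∫ x, φ x ∂μ :=
      integral_mono (integrable_const _) (cont_integrable μ φ) (fun x => by linarith [h x y])
    simpa using this
  have : ∫ y, (b - ∫ x, φ x ∂μ) ∂ν ≤ ∫ x, ψ x ∂ν :=
    integral_mono (integrable_const _) (cont_integrable ν ψ) (fun y => by linarith [h1 y])
  simp at this
  linarith

lemma cc_bound (h : C_c(K × K, ℝ)) : ∃ B : ℝ, ∀ p, |h p| ≤ B := by
  obtain ⟨B, hB⟩ := (isCompact_range (map_continuous h)).isBounded.exists_norm_le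
  exact ⟨B, fun p => hB _ ⟨p, rfl⟩⟩

lemma dualSet_nonempty (μ ν : Measure K) (h : C_c(K × K, ℝ)) : (dualSet μ ν h).Nonempty := by
  obtain ⟨B, hB⟩ := cc_bound h
  exact ⟨_, ContinuousMap.const _ B, 0, fun x y => by simpa using (le_abs_self _).trans (hB (x, y)),
    rfl⟩

lemma dualSet_bdd (μ ν : Measure K) [IsProbabilityMeasure μ] [IsProbabilityMeasure ν]
    (h : C_c(K × K, ℝ)) : BddBelow (dualSet μ ν h) := by
  obtain ⟨B, hB⟩ := cc_bound h
  refine ⟨-B, ?_⟩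
  rintro r ⟨φ, ψ, hh, rfl⟩
  exact dual_lower μ ν φ ψ _ fun x y => ((abs_le.1 (hB (x, y))).1).trans (hh x y)

lemma N_smul_le (μ ν : Measure K) [IsProbabilityMeasure μ] [IsProbabilityMeasure ν]
    (c : ℝ) (hc : 0 < c) (h : C_c(K × K, ℝ)) :
    sInf (dualSet μ ν (c • h)) ≤ c * sInf (dualSet μ ν h) := by
  rw [← div_le_iff₀' hc]
  refine le_csInf (dualSet_nonempty μ ν h) ?_
  rintro r ⟨φ, ψ, hh, rfl⟩
  rw [div_le_iff₀' hc]
  refine csInf_le (dualSet_bdd μ ν _) ⟨c • φ, c • ψ, ?_, ?_⟩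
  · intro x y
    have := mul_le_mul_of_nonneg_left (hh x y) hc.le
    simpa [mul_add] using this
  · simp [integral_const_mul, mul_add]

lemma N_smul (μ ν : Measure K) [IsProbabilityMeasure μ] [IsProbabilityMeasure ν]
    (c : ℝ) (hc : 0 < c) (h : C_c(K × K, ℝ)) :
    sInf (dualSet μ ν (c • h)) = c * sInf (dualSet μ ν h) := by
  refine le_antisymm (N_smul_le μ ν c hc h) ?_
  have := N_smul_le μ ν c⁻¹ (inv_pos.2 hc) (c • h)
  rw [smul_smul, inv_mul_cancel₀ hc.ne', one_smul] at this
  rwa [← div_eq_inv_mul, le_div_iff₀' hc] at this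

lemma N_add (μ ν : Measure K) [IsProbabilityMeasure μ] [IsProbabilityMeasure ν]
    (g h : C_c(K × K, ℝ)) :
    sInf (dualSet μ ν (g + h)) ≤ sInf (dualSet μ ν g) + sInf (dualSet μ ν h) := by
  rw [← sub_le_iff_le_add]
  refine le_csInf (dualSet_nonempty μ ν g) ?_
  rintro r ⟨φ, ψ, hh, rfl⟩
  rw [sub_le_comm]
  refine le_csInf (dualSet_nonempty μ ν h) ?_
  rintro r ⟨φ', ψ', hh', rfl⟩
  rw [sub_le_iff_le_add]
  refine csInf_le (dualSet_bdd μ ν _) ⟨φ + φ', ψ + ψ', ?_, ?_⟩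
  · intro x y
    have h1 := hh x y
    have h2 := hh' x y
    simp only [CompactlySupportedContinuousMap.coe_add, ContinuousMap.add_apply, Pi.add_apply]
    linarith
  · simp only [ContinuousMap.add_apply]
    rw [integral_add (cont_integrable μ φ) (cont_integrable μ φ'),
      integral_add (cont_integrable ν ψ) (cont_integrable ν ψ')]
    ring

lemma exists_dual_functional (μ ν : Measure K) [IsProbabilityMeasure μ] [IsProbabilityMeasure ν]
    (c : C_c(K × K, ℝ)) : ∃ L : C_c(K × K, ℝ) →ₗ[ℝ] ℝ,
      L c = sInf (dualSet μ ν c) ∧ ∀ h, L h ≤ sInf (dualSet μ ν h) := by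
  have N0 : sInf (dualSet μ ν (0 : C_c(K × K, ℝ))) = 0 := by
    have := N_smul μ ν 2 (by norm_num) 0
    rw [smul_zero] at this
    linarith
  have H : ∀ t : ℝ, t • c = 0 → (RingHom.id ℝ) t • sInf (dualSet μ ν c) = 0 := by
    intro t ht
    by_cases h : t = 0
    · simp [h]
    · have hc0 : c = 0 := by
        ext p
        have := DFunLike.congr_fun ht p
        simpa [h] using this
      rw [hc0, N0, smul_zero]
  obtain ⟨L, hL1, hL2⟩ := exists_extension_of_le_sublinear
    (LinearPMap.mkSpanSingleton' c (sInf (dualSet μ ν c)) H) (fun h => sInf (dualSet μ ν h))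
    (fun t ht x => N_smul μ ν t ht x) (N_add μ ν) (by
      rintro ⟨x, hx⟩
      obtain ⟨t, rfl⟩ := Submodule.mem_span_singleton.1 hx
      rw [LinearPMap.mkSpanSingleton'_apply]
      simp only [RingHom.id_apply, smul_eq_mul]
      rcases lt_trichotomy t 0 with h | h | h
      · have h1 := N_add μ ν (t • c) ((-t) • c)
        have h2 : t • c + (-t) • c = 0 := by
          ext p
          simp
        rw [h2, N0, N_smul μ ν (-t) (by linarith)] at h1
        linarith
      · subst h
        simp [N0]
      · rw [N_smul μ ν t h])
  refine ⟨L, ?_, hL2⟩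
  have := hL1 ⟨c, Submodule.mem_span_singleton_self c⟩
  exact this.trans (LinearPMap.mkSpanSingleton'_apply_self _ _ _ _)

lemma exists_dual_coupling (μ ν : Measure K) [IsProbabilityMeasure μ] [IsProbabilityMeasure ν]
    (c : C_c(K × K, ℝ)) : ∃ γ : Measure (K × K), IsProbabilityMeasure γ ∧
      γ.map Prod.fst = μ ∧ γ.map Prod.snd = ν ∧ ∫ p, c p ∂γ = sInf (dualSet μ ν c) := by
  obtain ⟨L, hLc, hL⟩ := exists_dual_functional μ ν c
  have hpos : ∀ h : C_c(K × K, ℝ), 0 ≤ h → 0 ≤ L h := by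
    intro h hh
    have h1 : L (-h) ≤ 0 := (hL (-h)).trans
      (csInf_le (dualSet_bdd μ ν _) ⟨0, 0, fun x y => by simpa using hh (x, y), by simp⟩)
    rw [map_neg] at h1
    linarith
  let Λ := PositiveLinearMap.mk₀ L hpos
  let γ := RealRMK.rieszMeasure Λ
  have hγ : ∀ h : C_c(K × K, ℝ), ∫ p, h p ∂γ = L h := fun h => RealRMK.integral_rieszMeasure Λ h
  have hle : ∀ φ ψ : C(K, ℝ), ∫ p, (φ p.1 + ψ p.2) ∂γ ≤ ∫ x, φ x ∂μ + ∫ x, ψ x ∂ν := by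
    intro φ ψ
    let h : C_c(K × K, ℝ) := CompactlySupportedContinuousMap.continuousMapEquiv
      (⟨fun p => φ p.1 + ψ p.2, by fun_prop⟩ : C(K × K, ℝ))
    have h1 : ∫ p, (φ p.1 + ψ p.2) ∂γ = L h := hγ h
    rw [h1]
    exact (hL h).trans (csInf_le (dualSet_bdd μ ν _) ⟨φ, ψ, fun x y => le_rfl, rfl⟩)
  have heq : ∀ φ ψ : C(K, ℝ), ∫ p, (φ p.1 + ψ p.2) ∂γ = ∫ x, φ x ∂μ + ∫ x, ψ x ∂ν := by
    intro φ ψ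
    refine le_antisymm (hle φ ψ) ?_
    have := hle (-φ) (-ψ)
    simp only [ContinuousMap.neg_apply, ← neg_add, integral_neg] at this
    linarith
  have hfin : IsFiniteMeasure γ := by
    constructor
    exact isCompact_univ.measure_lt_top
  have hmass : IsProbabilityMeasure γ := by
    have := heq (ContinuousMap.const _ 1) 0
    simp at this
    exact (isProbabilityMeasure_iff_real).2 this
  refine ⟨γ, hmass, ?_, ?_, ?_⟩
  · have := Measure.isProbabilityMeasure_map (μ := γ) (measurable_fst (α := K) (β := K)).aemeasurable
    refine ext_of_forall_integral_eq_of_IsFiniteMeasure fun f => ?_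
    rw [integral_map measurable_fst.aemeasurable f.continuous.aestronglyMeasurable]
    have := heq f.toContinuousMap 0
    simpa using this
  · have := Measure.isProbabilityMeasure_map (μ := γ) (measurable_snd (α := K) (β := K)).aemeasurable
    refine ext_of_forall_integral_eq_of_IsFiniteMeasure fun f => ?_
    rw [integral_map measurable_snd.aemeasurable f.continuous.aestronglyMeasurable]
    have := heq 0 f.toContinuousMap
    simpa using this
  · rw [hγ, hLc]

end duality

lemma map_val_comap {d : ℕ} {Ω : Set (EuclideanSpace ℝ (Fin d))} (hΩ : MeasurableSet Ω)
    (μ : Measure (EuclideanSpace ℝ (Fin d))) (hμ : μ Ωᶜ = 0) :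
    (μ.comap ((↑) : Ω → EuclideanSpace ℝ (Fin d))).map (↑) = μ := by
  rw [(MeasurableEmbedding.subtype_coe hΩ).map_comap, Subtype.range_coe]
  exact Measure.restrict_eq_self_of_ae_mem (by simpa [mem_ae_iff] using hμ)

lemma prob_comap {d : ℕ} {Ω : Set (EuclideanSpace ℝ (Fin d))} (hΩ : MeasurableSet Ω)
    (μ : Measure (EuclideanSpace ℝ (Fin d))) [IsProbabilityMeasure μ] (hμ : μ Ωᶜ = 0) :
    IsProbabilityMeasure (μ.comap ((↑) : Ω → EuclideanSpace ℝ (Fin d))) := by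
  have h := map_val_comap hΩ μ hμ
  constructor
  have h1 : μ univ = 1 := measure_univ
  rw [← h, Measure.map_apply measurable_subtype_coe MeasurableSet.univ] at h1
  simpa using h1

lemma W1_le {d : ℕ} (μ ν : Measure (EuclideanSpace ℝ (Fin d)))
    (γ : Measure (EuclideanSpace ℝ (Fin d) × EuclideanSpace ℝ (Fin d)))
    (h0 : IsProbabilityMeasure γ) (h1 : γ.map Prod.fst = μ) (h2 : γ.map Prod.snd = ν) :
    W1 μ ν ≤ ∫ p, ‖p.1 - p.2‖ ∂γ := by
  refine csInf_le ⟨0, ?_⟩ ⟨γ, h0, h1, h2, rfl⟩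
  rintro r ⟨γ', -, -, -, rfl⟩
  exact integral_nonneg fun _ => norm_nonneg _

/-- Approximate Kantorovich-Rubinstein duality. -/
lemma kr_duality {d : ℕ} (Ω : Set (EuclideanSpace ℝ (Fin d)))
    (hΩc : IsCompact Ω) (μ ν : Measure (EuclideanSpace ℝ (Fin d)))
    [IsProbabilityMeasure μ] [IsProbabilityMeasure ν]
    (hμΩ : μ Ωᶜ = 0) (hνΩ : ν Ωᶜ = 0) (ε : ℝ) (hε : 0 < ε) :
    ∃ u : EuclideanSpace ℝ (Fin d) → ℝ, LipschitzWith 1 u ∧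
      W1 μ ν - ε ≤ ∫ x, u x ∂μ - ∫ x, u x ∂ν := by
  have hΩm : MeasurableSet Ω := hΩc.measurableSet
  have hne : Ω.Nonempty := by
    by_contra h
    rw [not_nonempty_iff_eq_empty] at h
    simp [h] at hμΩ
  have : Nonempty Ω := hne.to_subtype
  have : CompactSpace Ω := isCompact_iff_compactSpace.1 hΩc
  set μ' := μ.comap ((↑) : Ω → EuclideanSpace ℝ (Fin d)) with hμ'
  set ν' := ν.comap ((↑) : Ω → EuclideanSpace ℝ (Fin d)) with hν'
  have : IsProbabilityMeasure μ' := prob_comap hΩm μ hμΩ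
  have : IsProbabilityMeasure ν' := prob_comap hΩm ν hνΩ
  have hμm : μ'.map (↑) = μ := map_val_comap hΩm μ hμΩ
  have hνm : ν'.map (↑) = ν := map_val_comap hΩm ν hνΩ
  let c : C_c(Ω × Ω, ℝ) := CompactlySupportedContinuousMap.continuousMapEquiv
    (⟨fun p => -‖(p.1 : EuclideanSpace ℝ (Fin d)) - p.2‖, by fun_prop⟩ : C(Ω × Ω, ℝ))
  have hc : ∀ p, c p = -‖(p.1 : EuclideanSpace ℝ (Fin d)) - p.2‖ := fun p => rfl
  obtain ⟨γ, hγ, hγ1, hγ2, hγc⟩ := exists_dual_coupling μ' ν' c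
  have hmeas : Measurable (Prod.map ((↑) : Ω → EuclideanSpace ℝ (Fin d))
      ((↑) : Ω → EuclideanSpace ℝ (Fin d))) :=
    measurable_subtype_coe.prodMap measurable_subtype_coe
  have hW : W1 μ ν ≤ - sInf (dualSet μ' ν' c) := by
    have h1 := W1_le μ ν (γ.map (Prod.map (↑) (↑)))
      (Measure.isProbabilityMeasure_map hmeas.aemeasurable)
      (by
        rw [Measure.map_map measurable_fst hmeas, ← hμm, ← hγ1,
          Measure.map_map measurable_subtype_coe measurable_fst]
        rfl)
      (by
        rw [Measure.map_map measurable_snd hmeas, ← hνm, ← hγ2,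
          Measure.map_map measurable_subtype_coe measurable_snd]
        rfl)
    rw [integral_map hmeas.aemeasurable
      (Continuous.aestronglyMeasurable (by fun_prop))] at h1
    refine h1.trans (le_of_eq ?_)
    rw [← hγc, ← integral_neg]
    simp [hc]
  obtain ⟨r, ⟨φ, ψ, hφψ, rfl⟩, hr⟩ := exists_lt_of_csInf_lt (dualSet_nonempty μ' ν' c)
    (show sInf (dualSet μ' ν' c) < sInf (dualSet μ' ν' c) + ε by linarith)
  obtain ⟨B, hB⟩ := (isCompact_range ψ.continuous).isBounded.exists_norm_le
  have hB' : ∀ y, -B ≤ ψ y := fun y => (abs_le.1 (hB _ ⟨y, rfl⟩)).1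
  have hbdd : ∀ x : EuclideanSpace ℝ (Fin d),
      BddBelow (range fun y : Ω => ‖x - y‖ + ψ y) := by
    intro x
    refine ⟨-B, ?_⟩
    rintro _ ⟨y, rfl⟩
    have := norm_nonneg (x - (y : EuclideanSpace ℝ (Fin d)))
    simp only
    linarith [hB' y]
  let u : EuclideanSpace ℝ (Fin d) → ℝ := fun x => ⨅ y : Ω, (‖x - y‖ + ψ y)
  have hu : LipschitzWith 1 u := by
    refine LipschitzWith.of_le_add fun x z => ?_
    rw [← sub_le_iff_le_add]
    refine le_ciInf fun y => ?_
    have h1 : u x ≤ ‖x - y‖ + ψ y := ciInf_le (hbdd x) y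
    have h2 : ‖x - y‖ ≤ ‖x - z‖ + ‖z - y‖ := norm_sub_le_norm_sub_add_norm_sub _ _ _
    rw [dist_eq_norm]
    linarith
  refine ⟨u, hu, ?_⟩
  have huc := hu.continuous
  have e1 : ∫ x, u x ∂μ = ∫ x : Ω, u x ∂μ' := by
    conv_lhs => rw [← hμm]
    rw [integral_map measurable_subtype_coe.aemeasurable huc.aestronglyMeasurable]
  have e2 : ∫ x, u x ∂ν = ∫ x : Ω, u x ∂ν' := by
    conv_lhs => rw [← hνm]
    rw [integral_map measurable_subtype_coe.aemeasurable huc.aestronglyMeasurable]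
  let u' : C(Ω, ℝ) := ⟨fun x => u x, huc.comp continuous_subtype_val⟩
  have i1 : -∫ x, φ x ∂μ' ≤ ∫ x : Ω, u x ∂μ' := by
    rw [← integral_neg]
    refine integral_mono (cont_integrable μ' φ).neg (cont_integrable μ' u') fun x => ?_
    refine le_ciInf fun y => ?_
    have := hφψ x y
    rw [hc] at this
    linarith
  have i2 : ∫ x : Ω, u x ∂ν' ≤ ∫ x, ψ x ∂ν' := by
    refine integral_mono (cont_integrable ν' u') (cont_integrable ν' ψ) fun x => ?_
    have : u x ≤ ‖(x : EuclideanSpace ℝ (Fin d)) - x‖ + ψ x := ciInf_le (hbdd x) x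
    simpa using this
  rw [e1, e2]
  linarith

lemma grad_props {d : ℕ} (u : EuclideanSpace ℝ (Fin d) → ℝ) (hu : LipschitzWith 1 u)
    (x g : EuclideanSpace ℝ (Fin d)) (hg : HasGradientAt u g x) : ‖g‖ ≤ 1 := by
  have h1 := norm_fderiv_le_of_lipschitz ℝ (x₀ := x) hu
  rw [hg.hasFDerivAt.fderiv] at h1
  simpa using h1

lemma grad_dir {d : ℕ} (u : EuclideanSpace ℝ (Fin d) → ℝ) (hu : LipschitzWith 1 u)
    (x y g : EuclideanSpace ℝ (Fin d)) (hg : HasGradientAt u g x)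
    (hxy : u x - u y = ‖x - y‖) : ‖x - y‖ • g = x - y := by
  have hg1 := grad_props u hu x g hg
  have hlip : ∀ a b, u a - u b ≤ ‖a - b‖ := by
    intro a b
    have := hu.dist_le_mul a b
    rw [Real.dist_eq, dist_eq_norm] at this
    simpa using (le_abs_self _).trans this
  have hline : ∀ t ∈ Icc (0 : ℝ) 1, u (x + t • (y - x)) = u x - t * ‖x - y‖ := by
    intro t ht
    have h1 := hlip x (x + t • (y - x))
    have h2 := hlip (x + t • (y - x)) y
    have e1 : x - (x + t • (y - x)) = t • (x - y) := by module
    have e2 : x + t • (y - x) - y = (1 - t) • (x - y) := by module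
    rw [e1, norm_smul, Real.norm_of_nonneg ht.1] at h1
    rw [e2, norm_smul, Real.norm_of_nonneg (by linarith [ht.2])] at h2
    linarith
  have hd1 : HasDerivAt (fun t : ℝ => u (x + t • (y - x))) (inner ℝ g (y - x)) 0 := by
    have hl : HasDerivAt (fun t : ℝ => x + t • (y - x)) (y - x) 0 := by
      simpa using ((hasDerivAt_id (0 : ℝ)).smul_const (y - x)).const_add x
    have hg' : HasFDerivAt u (InnerProductSpace.toDual ℝ _ g) (x + (0 : ℝ) • (y - x)) := by
      simpa using hg.hasFDerivAt
    have h3 := hg'.comp_hasDerivAt (0 : ℝ) hl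
    rw [InnerProductSpace.toDual_apply_apply] at h3
    exact h3
  have hd2 : HasDerivWithinAt (fun t : ℝ => u x - t * ‖x - y‖) (-‖x - y‖) (Icc 0 1) 0 := by
    have := (((hasDerivAt_id (0 : ℝ)).mul_const ‖x - y‖).const_sub (u x)).hasDerivWithinAt
      (s := Icc 0 1)
    simpa using this
  have hd3 := hd2.congr hline (hline 0 (by simp))
  have heq : inner ℝ g (y - x) = -‖x - y‖ :=
    (uniqueDiffOn_Icc (zero_lt_one' ℝ) 0 (by simp)).eq_deriv _ hd1.hasDerivWithinAt hd3
  have heq' : inner ℝ g (x - y) = ‖x - y‖ := by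
    rw [← neg_sub y x, inner_neg_right, heq]
    simp
  have hsq : ‖‖x - y‖ • g - (x - y)‖ ^ 2 ≤ 0 := by
    rw [norm_sub_sq_real, norm_smul, real_inner_smul_left, heq', norm_norm]
    have h3 : ‖g‖ ^ 2 ≤ 1 := by nlinarith [norm_nonneg g]
    nlinarith [sq_nonneg ‖x - y‖]
  have h0 : ‖‖x - y‖ • g - (x - y)‖ = 0 := by nlinarith [norm_nonneg (‖x - y‖ • g - (x - y))]
  exact sub_eq_zero.1 (norm_eq_zero.1 h0)

theorem stmt13 {d : ℕ} (hd : 1 ≤ d) (Ω : Set (EuclideanSpace ℝ (Fin d)))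
    (hΩc : IsCompact Ω) (hΩv : Convex ℝ Ω)
    (μ ν : Measure (EuclideanSpace ℝ (Fin d)))
    [IsProbabilityMeasure μ] [IsProbabilityMeasure ν]
    (hμΩ : μ Ωᶜ = 0) (hνΩ : ν Ωᶜ = 0) (hac : μ ≪ volume)
    (u0 : EuclideanSpace ℝ (Fin d) → ℝ) (hu0 : IsKantorovichPotential Ω μ ν u0)
    (T0 : EuclideanSpace ℝ (Fin d) → EuclideanSpace ℝ (Fin d))
    (hT0 : IsOptimalMap Ω μ ν T0)
    (η : ℝ) (hη : 0 < η)
    (f : EuclideanSpace ℝ (Fin d) → EuclideanSpace ℝ (Fin d)) (hf : Measurable f)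
    (hfae : ∀ᵐ x ∂(volume.restrict Ω), ∃ g : EuclideanSpace ℝ (Fin d),
      HasGradientWithinAt u0 g Ω x ∧ f x = x - η • g)
    (hmed : 1 / 2 < μ {x | x ∈ Ω ∧ η ≤ ‖x - T0 x‖}) :
    W1 (μ.map f) ν < W1 μ ν := by
  obtain ⟨hT, hTΩ, hTν, hTW⟩ := hT0
  obtain ⟨hL, hmax⟩ := hu0
  have hΩm : MeasurableSet Ω := hΩc.measurableSet
  have hmemμ : ∀ᵐ x ∂μ, x ∈ Ω := by simpa [mem_ae_iff] using hμΩ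
  have hmemν : ∀ᵐ x ∂ν, x ∈ Ω := by simpa [mem_ae_iff] using hνΩ
  obtain ⟨u, hu, hueq⟩ := hL.extend_real
  have huc := hu.continuous
  have eμ : ∫ x, u0 x ∂μ = ∫ x, u x ∂μ :=
    integral_congr_ae (hmemμ.mono fun x hx => hueq hx)
  have eν : ∫ x, u0 x ∂ν = ∫ x, u x ∂ν :=
    integral_congr_ae (hmemν.mono fun x hx => hueq hx)
  have hdual : W1 μ ν ≤ ∫ x, u x ∂μ - ∫ x, u x ∂ν := by
    refine le_of_forall_pos_le_add fun ε hε => ?_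
    obtain ⟨v, hv, hvW⟩ := kr_duality Ω hΩc μ ν hμΩ hνΩ ε hε
    have := hmax v hv.lipschitzOnWith
    rw [eμ, eν] at this
    linarith
  -- integrability
  obtain ⟨R, hR⟩ := hΩc.isBounded.exists_norm_le
  have hint1 : Integrable (fun x => ‖x - T0 x‖) μ := by
    refine Integrable.of_bound (by fun_prop) (R + R) ?_
    filter_upwards [hmemμ] with x hx
    rw [norm_norm]
    exact (norm_sub_le _ _).trans (add_le_add (hR _ hx) (hR _ (hTΩ hx)))
  obtain ⟨B, hB⟩ := (hΩc.image huc).isBounded.exists_norm_le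
  have hint2 : Integrable u μ := by
    refine Integrable.of_bound huc.aestronglyMeasurable B ?_
    filter_upwards [hmemμ] with x hx using hB _ ⟨x, hx, rfl⟩
  have hint3 : Integrable (fun x => u (T0 x)) μ := by
    refine Integrable.of_bound (huc.measurable.comp hT).aestronglyMeasurable B ?_
    filter_upwards [hmemμ] with x hx using hB _ ⟨T0 x, hTΩ hx, rfl⟩
  have eT : ∫ x, u x ∂ν = ∫ x, u (T0 x) ∂μ := by
    rw [← hTν, integral_map hT.aemeasurable huc.aestronglyMeasurable]
  have hlip : ∀ a b, u a - u b ≤ ‖a - b‖ := by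
    intro a b
    have := hu.dist_le_mul a b
    rw [Real.dist_eq, dist_eq_norm] at this
    simpa using (le_abs_self _).trans this
  have hnn : 0 ≤ fun x => ‖x - T0 x‖ - (u x - u (T0 x)) :=
    fun x => sub_nonneg.2 (hlip _ _)
  have hae : ∀ᵐ x ∂μ, u x - u (T0 x) = ‖x - T0 x‖ := by
    have hz : ∫ x, (‖x - T0 x‖ - (u x - u (T0 x))) ∂μ = 0 := by
      refine le_antisymm ?_ (integral_nonneg hnn)
      have hint4 : Integrable (fun x => u x - u (T0 x)) μ := hint2.sub hint3
      rw [integral_sub hint1 hint4, integral_sub hint2 hint3, hTW, ← eT]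
      linarith
    rw [integral_eq_zero_iff_of_nonneg hnn (hint1.sub (hint2.sub hint3))] at hz
    filter_upwards [hz] with x hx
    simp only [Pi.zero_apply] at hx
    linarith
  -- interior points
  have hfr : ∀ᵐ x ∂μ, x ∉ frontier Ω := by
    have := hac (hΩv.addHaar_frontier volume)
    exact measure_eq_zero_iff_ae_notMem.1 this
  have hgr : ∀ᵐ x ∂μ, x ∈ Ω → ∃ g : EuclideanSpace ℝ (Fin d),
      HasGradientWithinAt u0 g Ω x ∧ f x = x - η • g :=
    hac.ae_le ((ae_restrict_iff' hΩm).1 hfae)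
  set A : Set (EuclideanSpace ℝ (Fin d)) := {x | x ∈ Ω ∧ η ≤ ‖x - T0 x‖} with hA
  have hAm : MeasurableSet A :=
    hΩm.inter (measurableSet_le measurable_const (measurable_id.sub hT).norm)
  have hpt : ∀ᵐ x ∂μ, ‖f x - T0 x‖ ≤ ‖x - T0 x‖ + (η - A.indicator (fun _ => 2 * η) x) := by
    filter_upwards [hmemμ, hae, hfr, hgr] with x hx hxe hxf hxg
    obtain ⟨g, hg, hfx⟩ := hxg hx
    have hint : x ∈ interior Ω := by
      by_contra h
      exact hxf ⟨subset_closure hx, h⟩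
    have hnhds : Ω ∈ 𝓝 x := mem_interior_iff_mem_nhds.1 hint
    have hg' : HasGradientAt u g x := by
      rw [hasGradientAt_iff_hasFDerivAt]
      have h1 : HasFDerivAt u0 (InnerProductSpace.toDual ℝ _ g) x :=
        (hasGradientWithinAt_iff_hasFDerivWithinAt.1 hg).hasFDerivAt hnhds
      refine h1.congr_of_eventuallyEq ?_
      filter_upwards [hnhds] with z hz using (hueq hz).symm
    have hn := grad_props u hu x g hg'
    by_cases hxA : x ∈ A
    · rw [indicator_of_mem hxA]
      have hD : η ≤ ‖x - T0 x‖ := hxA.2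
      have hdir := grad_dir u hu x (T0 x) g hg' hxe
      have e : f x - T0 x = (‖x - T0 x‖ - η) • g := by
        rw [hfx, sub_smul, hdir]
        abel
      rw [e, norm_smul, Real.norm_of_nonneg (by linarith)]
      nlinarith
    · rw [indicator_of_notMem hxA]
      have e : f x - T0 x = (x - T0 x) - η • g := by
        rw [hfx]
        abel
      rw [e]
      refine (norm_sub_le _ _).trans ?_
      rw [norm_smul, Real.norm_of_nonneg hη.le]
      nlinarith
  -- the coupling
  have hfT : Measurable fun x => (f x, T0 x) := hf.prodMk hT
  have hW := W1_le (μ.map f) ν (μ.map fun x => (f x, T0 x))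
    (Measure.isProbabilityMeasure_map hfT.aemeasurable)
    (by rw [Measure.map_map measurable_fst hfT]; rfl)
    (by rw [Measure.map_map measurable_snd hfT]; exact hTν)
  rw [integral_map hfT.aemeasurable (Continuous.aestronglyMeasurable (by fun_prop))] at hW
  refine hW.trans_lt ?_
  have hi4 : Integrable (A.indicator fun _ => 2 * η) μ := (integrable_const _).indicator hAm
  have hle := integral_mono_of_nonneg (Filter.Eventually.of_forall fun x => norm_nonneg _)
    (hint1.add ((integrable_const η).sub hi4)) hpt
  refine hle.trans_lt ?_
  have hval : ∫ x, (‖x - T0 x‖ + (η - A.indicator (fun _ => 2 * η) x)) ∂μ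
      = W1 μ ν + (η - μ.real A * (2 * η)) := by
    have hi5 : Integrable (fun x => η - A.indicator (fun _ => 2 * η) x) μ :=
      (integrable_const η).sub hi4
    rw [integral_add hint1 hi5,
      integral_sub (integrable_const η) hi4, integral_indicator_const _ hAm, hTW]
    simp
  have hreal : 1 / 2 < μ.real A := by
    have := (ENNReal.toReal_lt_toReal (by simp) (measure_ne_top μ A)).2 hmed
    simpa [Measure.real] using this
  refine (le_of_eq hval).trans_lt ?_
  nlinarith
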